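/- Let I ⊆ ℝ be an interval with more than one point, p ∈ ℕ, d ∈ ℕᵖ, α ∈ ℕ_p^d, and let 𝐌 = (M₁,…,M_p) be a d-averaging mapping on I such that all Mᵢ are continuous and strict. Then there exists a unique 𝐌_α-invariant mean if and only if the root graph 𝓡(G_α) is ergodic. -/

import Mathlib

/-- There is a walk of length exactly `n` from `v` to `w` in the digraph with edge relation `E`. -/
def HasWalkOfLength {V : Type*} (E : V → V → Prop) (v w : V) (n : ℕ) : Prop :=
  ∃ f : ℕ → V, f 0 = v ∧ f n = w ∧ ∀ i < n, E (f i) (f (i + 1))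

/-- `v ⇝ w` : there is a walk (of some length, possibly `0`) from `v` to `w`. -/
def Reaches {V : Type*} (E : V → V → Prop) : V → V → Prop :=
  Relation.ReflTransGen E

/-- The equivalence relation whose classes are the strongly connected components:
`v ∼ w` iff there are walks from `v` to `w` and from `w` to `v`. -/
def SCCSetoid {V : Type*} (E : V → V → Prop) : Setoid V where
  r v w := Reaches E v w ∧ Reaches E w v
  iseqv := ⟨fun _ => ⟨Relation.ReflTransGen.refl, Relation.ReflTransGen.refl⟩,
    fun h => ⟨h.2, h.1⟩,
    fun h h' => ⟨Relation.ReflTransGen.trans h.1 h'.1, Relation.ReflTransGen.trans h'.2 h.2⟩⟩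

/-- The edge relation of the quotient digraph `G^SCC` of strongly connected components :
`(P, Q)` is an edge iff `P ≠ Q` and there is an edge `(a, b) ∈ E` with `a ∈ P`, `b ∈ Q`. -/
def SCCEdge {V : Type*} (E : V → V → Prop) (P Q : Quotient (SCCSetoid E)) : Prop :=
  P ≠ Q ∧ ∃ a b : V, Quotient.mk (SCCSetoid E) a = P ∧ Quotient.mk (SCCSetoid E) b = Q ∧ E a b

/-- The root `R(G)`: the union of the strongly connected components having no
incoming edge in `G^SCC` (i.e. lying in the source of `G^SCC`). -/
def Root {V : Type*} (E : V → V → Prop) : Set V :=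
  {v | ∀ P, ¬ SCCEdge E P (Quotient.mk (SCCSetoid E) v)}

/-- `f` restricted to `{0,…,n}` is a cycle: a nonempty walk in which only the first and
last vertices are equal. -/
def IsCycle {V : Type*} (E : V → V → Prop) (f : ℕ → V) (n : ℕ) : Prop :=
  0 < n ∧ (∀ i < n, E (f i) (f (i + 1))) ∧ f 0 = f n ∧
    ∀ i j, i < j → j ≤ n → f i = f j → i = 0 ∧ j = n

/-- A digraph is aperiodic if no integer `k > 1` divides the length of every cycle. -/
def IsAperiodic {V : Type*} (E : V → V → Prop) : Prop :=
  ¬ ∃ k : ℕ, 1 < k ∧ ∀ (f : ℕ → V) (n : ℕ), IsCycle E f n → k ∣ n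

/-- A digraph is ergodic if it is nonempty, irreducible and aperiodic. -/
def IsErgodic {V : Type*} (E : V → V → Prop) : Prop :=
  Nonempty V ∧ (∀ v w : V, Reaches E v w) ∧ IsAperiodic E

/-- `M` is a mean on the interval `I ⊆ ℝ` (indexed by the finite index type `ι`):
`min x ≤ M x ≤ max x` for every `x : ι → I`. -/
def IsMeanOn (I : Set ℝ) {ι : Type*} [Fintype ι] (M : (ι → I) → I) : Prop :=
  ∀ (x : ι → I) (h : (Finset.univ : Finset ι).Nonempty),
    Finset.univ.inf' h (fun i => (x i : ℝ)) ≤ (M x : ℝ) ∧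
      (M x : ℝ) ≤ Finset.univ.sup' h (fun i => (x i : ℝ))

/-- `M` is a strict mean on `I`: it is a mean, and `min x < M x < max x`
whenever `x` is nonconstant. -/
def IsStrictMeanOn (I : Set ℝ) {ι : Type*} [Fintype ι] (M : (ι → I) → I) : Prop :=
  IsMeanOn I M ∧ ∀ (x : ι → I) (h : (Finset.univ : Finset ι).Nonempty),
    (∃ i j, x i ≠ x j) →
      Finset.univ.inf' h (fun i => (x i : ℝ)) < (M x : ℝ) ∧
        (M x : ℝ) < Finset.univ.sup' h (fun i => (x i : ℝ))

/-- The mean-type mapping `𝐌_α : Iᵖ → Iᵖ`, whose `i`-th coordinate is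
`Mᵢ(x_{α_{i,1}}, …, x_{α_{i,dᵢ}})`. -/
def MeanTypeMap {I : Set ℝ} {p : ℕ} (d : Fin p → ℕ) (M : ∀ i, (Fin (d i) → I) → I)
    (α : ∀ i, Fin (d i) → Fin p) : (Fin p → I) → (Fin p → I) :=
  fun x i => M i fun j => x (α i j)

/-- The edge relation of the α-incidence graph `G_α` on `{1,…,p}`:
edges are the pairs `(α_{i,j}, i)`. -/
def IncidenceE {p : ℕ} (d : Fin p → ℕ) (α : ∀ i, Fin (d i) → Fin p) :
    Fin p → Fin p → Prop :=
  fun a b => ∃ j : Fin (d b), α b j = a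

/-!
For a mapping `T` averaging along a digraph, the maxima of the iterates `Tⁿ x` decrease and their
minima increase. Their limits are the largest and the smallest invariant mean, so there is a unique
invariant mean iff the two limits agree for every `x`.

If the root graph is ergodic, some vertex `r` reaches every vertex by a walk of one common length
`N`. At a nonconstant `x`, strictness at `r` makes `T^N` lower the maximum or raise the minimum,
whereas at a cluster point of the orbit of `x` both are constant along the iteration; so this
cluster point is constant and the limits agree.

If the limits always agree, any two vertices have a common ancestor at the same distance. Applied
to two vertices of the root this gives irreducibility; applied to a vertex of the root and one of
its predecessors it gives closed walks of consecutive lengths, hence aperiodicity.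
-/

open Filter Set Topology

section Walks

variable {V W : Type*} {E : V → V → Prop} {u v w : V} {m n k : ℕ}

theorem hasWalkOfLength_zero : HasWalkOfLength E u v 0 ↔ u = v :=
  ⟨fun ⟨_, h0, h0', _⟩ => h0.symm.trans h0', fun h => ⟨fun _ => u, rfl, h, by simp⟩⟩

theorem hasWalkOfLength_succ :
    HasWalkOfLength E u w (n + 1) ↔ ∃ v, HasWalkOfLength E u v n ∧ E v w := by
  constructor
  · rintro ⟨f, rfl, rfl, hf⟩
    exact ⟨f n, ⟨f, rfl, rfl, fun i hi => hf i (by lia)⟩, hf n n.lt_succ_self⟩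
  · rintro ⟨v, ⟨f, rfl, rfl, hf⟩, hvw⟩
    refine ⟨fun i => if i ≤ n then f i else w, by simp, by simp, fun i hi => ?_⟩
    rcases Nat.lt_succ_iff_lt_or_eq.mp hi with hi | rfl
    · simpa [hi.le, Nat.succ_le_of_lt hi] using hf i hi
    · simpa using hvw

theorem hasWalkOfLength_succ_eq_comp (E : V → V → Prop) (n : ℕ) :
    (HasWalkOfLength E · · (n + 1)) = Relation.Comp (HasWalkOfLength E · · n) E :=
  funext₂ fun _ _ => propext hasWalkOfLength_succ

theorem hasWalkOfLength_segment {f : ℕ → V} (hf : ∀ l < n, E (f l) (f (l + 1))) {i j : ℕ}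
    (hij : i ≤ j) (hj : j ≤ n) : HasWalkOfLength E (f i) (f j) (j - i) :=
  ⟨fun l => f (i + l), rfl, by simp [Nat.add_sub_cancel' hij], fun l hl => hf (i + l) (by lia)⟩

theorem HasWalkOfLength.trans (huv : HasWalkOfLength E u v m) (hvw : HasWalkOfLength E v w n) :
    HasWalkOfLength E u w (m + n) := by
  induction n generalizing w with
  | zero => exact hasWalkOfLength_zero.mp hvw ▸ huv
  | succ n ih =>
    obtain ⟨z, hvz, hzw⟩ := hasWalkOfLength_succ.mp hvw
    exact hasWalkOfLength_succ.mpr ⟨z, ih hvz, hzw⟩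

theorem HasWalkOfLength.map {F : W → W → Prop} {g : V → W}
    (hg : ∀ a b, E a b → F (g a) (g b)) (h : HasWalkOfLength E u v n) :
    HasWalkOfLength F (g u) (g v) n := by
  obtain ⟨f, rfl, rfl, hf⟩ := h
  exact ⟨g ∘ f, rfl, rfl, fun i hi => hg _ _ (hf i hi)⟩

theorem reaches_iff_exists_hasWalkOfLength : Reaches E u v ↔ ∃ n, HasWalkOfLength E u v n := by
  constructor
  · intro h
    induction h with
    | refl => exact ⟨0, hasWalkOfLength_zero.mpr rfl⟩
    | tail _ hvw ih =>
      obtain ⟨n, hn⟩ := ih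
      exact ⟨n + 1, hasWalkOfLength_succ.mpr ⟨_, hn, hvw⟩⟩
  · rintro ⟨n, h⟩
    induction n generalizing v with
    | zero => exact hasWalkOfLength_zero.mp h ▸ .refl
    | succ n ih =>
      obtain ⟨z, huz, hzv⟩ := hasWalkOfLength_succ.mp h
      exact (ih huz).tail hzv

theorem isCycle_or_exists_shorter_closed_walks {f : ℕ → V} (hn : 0 < n)
    (hf : ∀ i < n, E (f i) (f (i + 1))) (hclosed : f 0 = f n) :
    IsCycle E f n ∨ ∃ a < n, ∃ b < n, a + b = n ∧
      (∃ v, HasWalkOfLength E v v a) ∧ ∃ v, HasWalkOfLength E v v b := by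
  by_cases hsimple : ∀ i j, i < j → j ≤ n → f i = f j → i = 0 ∧ j = n
  · exact .inl ⟨hn, hf, hclosed, hsimple⟩
  push Not at hsimple
  obtain ⟨i, j, hij, hj, hfij, hproper⟩ := hsimple
  have hinner := hasWalkOfLength_segment hf hij.le hj
  have houter := (hasWalkOfLength_segment hf i.zero_le (hij.le.trans hj)).trans
    (hfij ▸ hasWalkOfLength_segment hf hj le_rfl)
  exact .inr ⟨j - i, by lia, i - 0 + (n - j), by lia, by lia,
    ⟨f i, hfij ▸ hinner⟩, ⟨f 0, hclosed ▸ houter⟩⟩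

theorem dvd_of_closed_walk (hk : ∀ f n, IsCycle E f n → k ∣ n) (h : HasWalkOfLength E v v n) :
    k ∣ n := by
  induction n using Nat.strong_induction_on generalizing v with
  | _ n ih =>
    obtain rfl | hn := n.eq_zero_or_pos
    · exact dvd_zero k
    obtain ⟨f, hf0, hfn, hf⟩ := h
    rcases isCycle_or_exists_shorter_closed_walks hn hf (hf0.trans hfn.symm) with
      hcycle | ⟨a, ha, b, hb, hab, ⟨_, hwa⟩, ⟨_, hwb⟩⟩
    · exact hk f n hcycle
    · exact hab ▸ dvd_add (ih a ha hwa) (ih b hb hwb)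

/-- The additive monoid of lengths of closed walks at `r`; its gcd is the period of the strongly
connected component of `r`. -/
def closedWalkLengths (E : V → V → Prop) (r : V) : AddSubmonoid ℕ where
  carrier := {n | HasWalkOfLength E r r n}
  zero_mem' := hasWalkOfLength_zero.mpr rfl
  add_mem' := HasWalkOfLength.trans

theorem setGcd_closedWalkLengths_dvd (hE : ∀ v w, Reaches E v w) (r : V)
    (h : HasWalkOfLength E v v n) : Nat.setGcd (closedWalkLengths E r) ∣ n := by
  obtain ⟨a, ha⟩ := reaches_iff_exists_hasWalkOfLength.mp (hE r v)
  obtain ⟨b, hb⟩ := reaches_iff_exists_hasWalkOfLength.mp (hE v r)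
  have hab : a + b ∈ (closedWalkLengths E r : Set ℕ) := ha.trans hb
  have hanb : a + (n + b) ∈ (closedWalkLengths E r : Set ℕ) := ha.trans (h.trans hb)
  rw [add_left_comm] at hanb
  exact (Nat.dvd_add_left (Nat.setGcd_dvd_of_mem hab)).mp (Nat.setGcd_dvd_of_mem hanb)

theorem IsErgodic.setGcd_closedWalkLengths (hE : IsErgodic E) (r : V) :
    Nat.setGcd (closedWalkLengths E r) = 1 := by
  obtain ⟨-, hirr, haper⟩ := hE
  have hdvd : ∀ f n, IsCycle E f n → Nat.setGcd (closedWalkLengths E r) ∣ n :=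
    fun f n hc => setGcd_closedWalkLengths_dvd hirr r ⟨f, rfl, hc.2.2.1.symm, hc.2.1⟩
  by_contra hne
  rcases Nat.eq_zero_or_pos (Nat.setGcd (closedWalkLengths E r)) with h0 | hpos
  · refine haper ⟨2, one_lt_two, fun f n hc => ?_⟩
    exact (dvd_zero 2).trans (h0 ▸ hdvd f n hc)
  · exact haper ⟨_, by lia, hdvd⟩

theorem IsErgodic.eventually_hasWalkOfLength_self (hE : IsErgodic E) (r : V) :
    ∀ᶠ n in atTop, HasWalkOfLength E r r n := by
  obtain ⟨N, hN⟩ := Nat.exists_mem_closure_of_ge (closedWalkLengths E r : Set ℕ)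
  filter_upwards [eventually_ge_atTop N] with n hn
  have hmem := hN n hn (hE.setGcd_closedWalkLengths r ▸ one_dvd n)
  rwa [AddSubmonoid.closure_eq] at hmem

theorem eventually_hasWalkOfLength_of_reaches (hu : ∀ᶠ n in atTop, HasWalkOfLength E u u n)
    (huv : Reaches E u v) : ∀ᶠ n in atTop, HasWalkOfLength E u v n := by
  obtain ⟨l, hl⟩ := reaches_iff_exists_hasWalkOfLength.mp huv
  filter_upwards [(tendsto_sub_atTop_nat l).eventually hu, eventually_ge_atTop l] with n hn hle
  exact Nat.sub_add_cancel hle ▸ hn.trans hl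

end Walks

section Root

variable {V : Type*} {E : V → V → Prop} {u v : V} {n : ℕ}

theorem mem_root_iff : v ∈ Root E ↔ ∀ u, Reaches E u v → Reaches E v u := by
  constructor
  · intro hv u huv
    induction huv using Relation.ReflTransGen.head_induction_on with
    | refl => exact .refl
    | @head a b hab hbv hvb =>
      have hsame : Quotient.mk (SCCSetoid E) a = Quotient.mk (SCCSetoid E) v := by
        by_contra hne
        exact hv _ ⟨hne, a, b, rfl, Quotient.sound ⟨hbv, hvb⟩, hab⟩
      exact (Quotient.exact hsame).2
  · rintro hv _ ⟨hne, a, b, rfl, hbv, hab⟩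
    have hav : Reaches E a v := .head hab (Quotient.exact hbv).1
    exact hne (Quotient.sound ⟨hav, hv a hav⟩)

theorem mem_root_of_reaches (hv : v ∈ Root E) (huv : Reaches E u v) : u ∈ Root E :=
  mem_root_iff.mpr fun w hwu => huv.trans (mem_root_iff.mp hv w (hwu.trans huv))

theorem exists_mem_root_reaches [Finite V] (E : V → V → Prop) (v : V) :
    ∃ r ∈ Root E, Reaches E r v := by
  let _ : Preorder V :=
    { le := Reaches E, le_refl := fun _ => .refl, le_trans := fun _ _ _ h h' => h.trans h' }
  obtain ⟨r, hrv, -, hmin⟩ := Set.finite_univ.exists_le_minimal (mem_univ v)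
  exact ⟨r, mem_root_iff.mpr fun u hur => hmin (mem_univ u) hur, hrv⟩

/-- The edge relation of the root graph `𝓡(G)`, the subgraph of `G` induced by its root. -/
abbrev RootE (E : V → V → Prop) : Root E → Root E → Prop :=
  fun a b => E a b

theorem hasWalkOfLength_rootE {u v : Root E} :
    HasWalkOfLength (RootE E) u v n ↔ HasWalkOfLength E (u : V) v n := by
  refine ⟨HasWalkOfLength.map fun _ _ => id, fun h => ?_⟩
  induction n generalizing v with
  | zero => exact hasWalkOfLength_zero.mpr (Subtype.ext (hasWalkOfLength_zero.mp h))
  | succ n ih =>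
    obtain ⟨z, huz, hzv⟩ := hasWalkOfLength_succ.mp h
    exact hasWalkOfLength_succ.mpr
      ⟨⟨z, mem_root_of_reaches v.2 (.single hzv)⟩, ih huz, hzv⟩

theorem reaches_rootE {u v : Root E} : Reaches (RootE E) u v ↔ Reaches E (u : V) v := by
  simp only [reaches_iff_exists_hasWalkOfLength, hasWalkOfLength_rootE]

theorem IsErgodic.exists_eventually_forall_hasWalkOfLength [Finite V]
    (hE : IsErgodic (RootE E)) : ∃ r, ∀ᶠ n in atTop, ∀ v, HasWalkOfLength E r v n := by
  obtain ⟨r⟩ := hE.1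
  have hself : ∀ᶠ n in atTop, HasWalkOfLength E (r : V) r n :=
    (hE.eventually_hasWalkOfLength_self r).mono fun _ => hasWalkOfLength_rootE.mp
  refine ⟨r, eventually_all.mpr fun v => eventually_hasWalkOfLength_of_reaches hself ?_⟩
  obtain ⟨s, hs, hsv⟩ := exists_mem_root_reaches E v
  exact (reaches_rootE.mp (hE.2.1 r ⟨s, hs⟩)).trans hsv

/-- Any two vertices are reached from a common vertex by walks of the same length. -/
def HasCommonAncestors (E : V → V → Prop) : Prop :=
  ∀ v w, ∃ n u, HasWalkOfLength E u v n ∧ HasWalkOfLength E u w n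

theorem HasCommonAncestors.irreducible_rootE (h : HasCommonAncestors E) (v w : Root E) :
    Reaches (RootE E) v w := by
  obtain ⟨n, u, huv, huw⟩ := h v w
  have hvu := mem_root_iff.mp v.2 u (reaches_iff_exists_hasWalkOfLength.mpr ⟨n, huv⟩)
  exact reaches_rootE.mpr
    (hvu.trans (reaches_iff_exists_hasWalkOfLength.mpr ⟨n, huw⟩))

theorem HasCommonAncestors.isAperiodic_rootE (h : HasCommonAncestors E) {r s : V}
    (hr : r ∈ Root E) (hsr : E s r) : IsAperiodic (RootE E) := by
  -- A common ancestor of `r` and `s` lies on closed walks of two consecutive lengths.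
  rintro ⟨k, hk, hcycle⟩
  obtain ⟨n, u, hur, hus⟩ := h r s
  have hreach : Reaches E u r := reaches_iff_exists_hasWalkOfLength.mpr ⟨n, hur⟩
  obtain ⟨l, hru⟩ := reaches_iff_exists_hasWalkOfLength.mp (mem_root_iff.mp hr u hreach)
  have hdvd : ∀ m, HasWalkOfLength E u r m → k ∣ m + l := fun m hm =>
    dvd_of_closed_walk hcycle (v := ⟨u, mem_root_of_reaches hr hreach⟩)
      (hasWalkOfLength_rootE.mpr (hm.trans hru))
  have hsucc := hdvd (n + 1) (hasWalkOfLength_succ.mpr ⟨s, hus, hsr⟩)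
  rw [add_right_comm] at hsucc
  exact hk.ne' (Nat.dvd_one.mp ((Nat.dvd_add_right (hdvd n hur)).mp hsucc))

theorem HasCommonAncestors.isErgodic_rootE [Finite V] [Nonempty V] (h : HasCommonAncestors E)
    (hpred : ∀ v, ∃ u, E u v) : IsErgodic (RootE E) := by
  obtain ⟨r, hr, -⟩ := exists_mem_root_reaches E (Classical.arbitrary V)
  obtain ⟨s, hsr⟩ := hpred r
  exact ⟨⟨⟨r, hr⟩⟩, h.irreducible_rootE, h.isAperiodic_rootE hr hsr⟩

end Root

section Order

variable {V X : Type*} [Preorder X]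

/-- `K` is a mean in the order `X`: `K x` lies between any bounds common to the coordinates of
`x`. The two bounds are separate fields so that the notion is visibly self-dual. -/
structure IsMean (K : (V → X) → X) : Prop where
  le_of_forall_le : ∀ {x c}, (∀ v, x v ≤ c) → K x ≤ c
  ge_of_forall_ge : ∀ {x c}, (∀ v, c ≤ x v) → c ≤ K x

/-- `T` is averaging along the digraph `E`: the coordinate `T x v` lies between any bounds common
to the coordinates of `x` at the predecessors of `v`. -/
structure IsAveraging (E : V → V → Prop) (T : (V → X) → V → X) : Prop where
  le_of_forall_le : ∀ {x v c}, (∀ u, E u v → x u ≤ c) → T x v ≤ c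
  ge_of_forall_ge : ∀ {x v c}, (∀ u, E u v → c ≤ x u) → c ≤ T x v

/-- `T` is strictly averaging along the digraph `E`: moreover a bound on the coordinates at the
predecessors of `v` that is not attained at one of them is not attained by `T x v`. -/
structure IsStrictlyAveraging (E : V → V → Prop) (T : (V → X) → V → X) : Prop
    extends IsAveraging E T where
  lt_of_forall_le : ∀ {x u v c}, (∀ u, E u v → x u ≤ c) → E u v → x u < c → T x v < c
  gt_of_forall_ge : ∀ {x u v c}, (∀ u, E u v → c ≤ x u) → E u v → c < x u → c < T x v

variable {E F : V → V → Prop} {S T : (V → X) → V → X}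

theorem IsMean.dual {K : (V → X) → X} (h : IsMean K) : IsMean (X := Xᵒᵈ) K :=
  ⟨h.ge_of_forall_ge, h.le_of_forall_le⟩

theorem IsAveraging.dual (h : IsAveraging E T) : IsAveraging (X := Xᵒᵈ) E T :=
  ⟨h.ge_of_forall_ge, h.le_of_forall_le⟩

theorem IsAveraging.comp (hT : IsAveraging E T) (hS : IsAveraging F S) :
    IsAveraging (Relation.Comp F E) (T ∘ S) where
  le_of_forall_le hx := hT.le_of_forall_le fun w hw => hS.le_of_forall_le fun u hu =>
    hx u ⟨w, hu, hw⟩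
  ge_of_forall_ge hx := hT.ge_of_forall_ge fun w hw => hS.ge_of_forall_ge fun u hu =>
    hx u ⟨w, hu, hw⟩

theorem IsStrictlyAveraging.comp (hT : IsStrictlyAveraging E T) (hS : IsStrictlyAveraging F S) :
    IsStrictlyAveraging (Relation.Comp F E) (T ∘ S) where
  toIsAveraging := hT.toIsAveraging.comp hS.toIsAveraging
  lt_of_forall_le := by
    rintro x u v c hx ⟨w, huw, hwv⟩ hu
    exact hT.lt_of_forall_le
      (fun w hw => hS.le_of_forall_le fun u hu => hx u ⟨w, hu, hw⟩) hwv
      (hS.lt_of_forall_le (fun u hu => hx u ⟨w, hu, hwv⟩) huw hu)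
  gt_of_forall_ge := by
    rintro x u v c hx ⟨w, huw, hwv⟩ hu
    exact hT.gt_of_forall_ge
      (fun w hw => hS.ge_of_forall_ge fun u hu => hx u ⟨w, hu, hw⟩) hwv
      (hS.gt_of_forall_ge (fun u hu => hx u ⟨w, hu, hwv⟩) huw hu)

theorem IsAveraging.iterate (h : IsAveraging E T) (n : ℕ) :
    IsAveraging (HasWalkOfLength E · · n) T^[n] := by
  induction n with
  | zero =>
    exact ⟨fun hx => hx _ (hasWalkOfLength_zero.mpr rfl),
      fun hx => hx _ (hasWalkOfLength_zero.mpr rfl)⟩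
  | succ n ih =>
    rw [hasWalkOfLength_succ_eq_comp, Function.iterate_succ']
    exact h.comp ih

theorem IsStrictlyAveraging.iterate (h : IsStrictlyAveraging E T) (n : ℕ) :
    IsStrictlyAveraging (HasWalkOfLength E · · n) T^[n] := by
  induction n with
  | zero =>
    exact ⟨h.toIsAveraging.iterate 0, fun _ huv hu => hasWalkOfLength_zero.mp huv ▸ hu,
      fun _ huv hu => hasWalkOfLength_zero.mp huv ▸ hu⟩
  | succ n ih =>
    rw [hasWalkOfLength_succ_eq_comp, Function.iterate_succ']
    exact h.comp ih

theorem IsAveraging.exists_pred {X : Type*} [PartialOrder X] [Nontrivial X]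
    {T : (V → X) → V → X} (h : IsAveraging E T) (v : V) : ∃ u, E u v := by
  by_contra! hv
  obtain ⟨a, b, hab⟩ := exists_pair_ne X
  have hT : ∀ c, T (fun _ => a) v = c := fun c =>
    le_antisymm (h.le_of_forall_le fun u hu => (hv u hu).elim)
      (h.ge_of_forall_ge fun u hu => (hv u hu).elim)
  exact hab ((hT a).symm.trans (hT b))

end Order

section FiniteSup

variable {V X : Type*} [Finite V] [Nonempty V] [ConditionallyCompleteLinearOrder X]

theorem ciSup_lt_of_forall_lt {x : V → X} {c : X} (h : ∀ v, x v < c) : ⨆ v, x v < c := by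
  obtain ⟨v, hv⟩ := exists_eq_ciSup_of_finite (f := x)
  exact hv ▸ h v

theorem continuous_ciSup_apply [TopologicalSpace X] [OrderTopology X] :
    Continuous fun x : V → X => ⨆ v, x v := by
  have := Fintype.ofFinite V
  simp only [← Finset.sup'_univ_eq_ciSup]
  exact Continuous.finset_sup'_apply _ fun v _ => continuous_apply v

end FiniteSup

section InvariantMeans

variable {V X : Type*} [ConditionallyCompleteLinearOrder X] {E : V → V → Prop}
  {T : (V → X) → V → X} {x : V → X} {c : X}

/-- The limit of the decreasing sequence of maxima of the iterates `Tⁿ x`. -/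
noncomputable def upperMean (T : (V → X) → V → X) (x : V → X) : X :=
  ⨅ n, ⨆ v, T^[n] x v

/-- The limit of the increasing sequence of minima of the iterates `Tⁿ x`; it is `upperMean` for
the dual order. -/
noncomputable def lowerMean (T : (V → X) → V → X) (x : V → X) : X :=
  ⨆ n, ⨅ v, T^[n] x v

variable [Finite V]

theorem ciInf_le_ciSup_of_finite [Nonempty V] (x : V → X) : ⨅ v, x v ≤ ⨆ v, x v :=
  (Finite.ciInf_le x (Classical.arbitrary V)).trans (Finite.le_ciSup x _)

namespace IsAveraging

variable [Nonempty V]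

theorem antitone_ciSup_iterate (h : IsAveraging E T) (x : V → X) :
    Antitone fun n => ⨆ v, T^[n] x v := by
  refine antitone_nat_of_succ_le fun n => ciSup_le fun v => ?_
  rw [Function.iterate_succ_apply']
  exact h.le_of_forall_le fun u _ => Finite.le_ciSup (T^[n] x) u

theorem monotone_ciInf_iterate (h : IsAveraging E T) (x : V → X) :
    Monotone fun n => ⨅ v, T^[n] x v :=
  fun _ _ hmn => h.dual.antitone_ciSup_iterate x hmn

theorem ciInf_le_ciSup_iterate (h : IsAveraging E T) (x : V → X) (n : ℕ) :
    ⨅ v, x v ≤ ⨆ v, T^[n] x v :=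
  (h.monotone_ciInf_iterate x n.zero_le).trans (ciInf_le_ciSup_of_finite _)

theorem bddBelow_range_ciSup_iterate (h : IsAveraging E T) (x : V → X) :
    BddBelow (range fun n => ⨆ v, T^[n] x v) :=
  ⟨⨅ v, x v, forall_mem_range.mpr (h.ciInf_le_ciSup_iterate x)⟩

theorem isMean_upperMean (h : IsAveraging E T) : IsMean (upperMean T) where
  le_of_forall_le hx := ciInf_le_of_le (h.bddBelow_range_ciSup_iterate _) 0 (ciSup_le hx)
  ge_of_forall_ge hx := (le_ciInf hx).trans (le_ciInf (h.ciInf_le_ciSup_iterate _))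

theorem upperMean_apply (h : IsAveraging E T) (x : V → X) :
    upperMean T (T x) = upperMean T x := by
  simp only [upperMean, ← Function.iterate_succ_apply]
  exact (h.antitone_ciSup_iterate x).ciInf_comp_tendsto_atTop
    (h.bddBelow_range_ciSup_iterate x) (tendsto_add_atTop_nat 1)

theorem isMean_lowerMean (h : IsAveraging E T) : IsMean (lowerMean T) :=
  h.dual.isMean_upperMean.dual

theorem lowerMean_apply (h : IsAveraging E T) (x : V → X) :
    lowerMean T (T x) = lowerMean T x :=
  h.dual.upperMean_apply x

theorem le_upperMean_of_frequently (h : IsAveraging E T)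
    (hc : ∃ᶠ n in atTop, ∃ v, c ≤ T^[n] x v) : c ≤ upperMean T x := by
  refine le_ciInf fun m => ?_
  obtain ⟨n, hmn, v, hv⟩ := frequently_atTop.mp hc m
  exact (hv.trans (Finite.le_ciSup (T^[n] x) v)).trans (h.antitone_ciSup_iterate x hmn)

theorem lowerMean_le_of_frequently (h : IsAveraging E T)
    (hc : ∃ᶠ n in atTop, ∃ v, T^[n] x v ≤ c) : lowerMean T x ≤ c :=
  h.dual.le_upperMean_of_frequently hc

end IsAveraging

theorem IsMean.le_upperMean {K : (V → X) → X} (hK : IsMean K) (hinv : ∀ x, K (T x) = K x)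
    (x : V → X) : K x ≤ upperMean T x :=
  le_ciInf fun n =>
    (congrFun (Function.iterate_invariant (funext hinv) n) x).ge.trans
      (hK.le_of_forall_le (Finite.le_ciSup (T^[n] x)))

theorem IsMean.lowerMean_le {K : (V → X) → X} (hK : IsMean K) (hinv : ∀ x, K (T x) = K x)
    (x : V → X) : lowerMean T x ≤ K x :=
  hK.dual.le_upperMean hinv x

theorem IsAveraging.existsUnique_invariant_mean_iff [Nonempty V] (h : IsAveraging E T) :
    (∃! K : (V → X) → X, IsMean K ∧ ∀ x, K (T x) = K x) ↔
      ∀ x, lowerMean T x = upperMean T x := by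
  constructor
  · intro hunique
    exact congrFun (hunique.unique ⟨h.isMean_lowerMean, h.lowerMean_apply⟩
      ⟨h.isMean_upperMean, h.upperMean_apply⟩)
  · intro heq
    refine ⟨upperMean T, ⟨h.isMean_upperMean, h.upperMean_apply⟩, fun K ⟨hK, hinv⟩ => ?_⟩
    exact funext fun x => (hK.le_upperMean hinv x).antisymm
      ((heq x).ge.trans (hK.lowerMean_le hinv x))

theorem IsAveraging.hasCommonAncestors [Nonempty V] [Nontrivial X] (h : IsAveraging E T)
    (heq : ∀ x, lowerMean T x = upperMean T x) : HasCommonAncestors E := by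
  classical
  intro v w
  by_contra! hdisj
  obtain ⟨a, b, hab⟩ := exists_pair_lt X
  -- Choose `A` to be the set of ancestors of `v` at infinitely many distances `n`: iterating `T`
  -- from the point equal to `b` on `A` and to `a` elsewhere then gives `b` at `v` and `a` at `w`
  -- for infinitely many `n`.
  obtain ⟨A, hA⟩ := Finite.exists_infinite_fiber fun n => {u | HasWalkOfLength E u v n}
  have hfreq : ∃ᶠ n in atTop, {u | HasWalkOfLength E u v n} = A :=
    Nat.frequently_atTop_iff_infinite.mpr (Set.infinite_coe_iff.mp hA)
  let x : V → X := fun u => if u ∈ A then b else a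
  have hupper : b ≤ upperMean T x := by
    refine h.le_upperMean_of_frequently (hfreq.mono fun n hn => ⟨v, ?_⟩)
    refine (h.iterate n).ge_of_forall_ge fun u hu => ?_
    have huA : u ∈ A := hn ▸ hu
    simp [x, huA]
  have hlower : lowerMean T x ≤ a := by
    refine h.lowerMean_le_of_frequently (hfreq.mono fun n hn => ⟨w, ?_⟩)
    refine (h.iterate n).le_of_forall_le fun u hu => ?_
    have huA : u ∉ A := fun huA => hdisj n u (hn ▸ huA : u ∈ {u | HasWalkOfLength E u v n}) hu
    simp [x, huA]
  exact hab.not_ge (hupper.trans ((heq x).ge.trans hlower))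

theorem IsStrictlyAveraging.ciSup_lt_or_lt_ciInf [Nonempty V] (h : IsStrictlyAveraging E T)
    {r : V} (hr : ∀ v, E r v) (hx : ⨅ v, x v < ⨆ v, x v) :
    ⨆ v, T x v < ⨆ v, x v ∨ ⨅ v, x v < ⨅ v, T x v := by
  rcases (Finite.le_ciSup x r).lt_or_eq with hlt | hmax
  · exact .inl <| ciSup_lt_of_forall_lt fun v =>
      h.lt_of_forall_le (fun u _ => Finite.le_ciSup x u) (hr v) hlt
  · exact .inr <| ciSup_lt_of_forall_lt (X := Xᵒᵈ) fun v =>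
      h.gt_of_forall_ge (fun u _ => Finite.ciInf_le x u) (hr v) (hx.trans_eq hmax.symm)

end InvariantMeans

section Convergence

theorem apply_iterate_eq_of_mapClusterPt {Y Z : Type*} [TopologicalSpace Y] [TopologicalSpace Z]
    [T2Space Z] {T : Y → Y} (hT : Continuous T) {φ : Y → Z} (hφ : Continuous φ) {x y : Y} {c : Z}
    (hlim : Tendsto (fun n => φ (T^[n] x)) atTop (𝓝 c))
    (hy : MapClusterPt y atTop fun n => T^[n] x) (N : ℕ) : φ (T^[N] y) = c := by
  have hcluster : MapClusterPt (φ (T^[N] y)) atTop fun n => φ (T^[N] (T^[n] x)) :=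
    hy.continuousAt_comp (f := φ ∘ T^[N]) (hφ.comp (hT.iterate N)).continuousAt
  have hshift : Tendsto (fun n => φ (T^[N] (T^[n] x))) atTop (𝓝 c) := by
    simp only [← Function.iterate_add_apply, add_comm N]
    exact (tendsto_add_atTop_iff_nat N).mpr hlim
  exact eq_of_nhds_neBot (hcluster.neBot.mono (inf_le_inf_left _ hshift))

variable {V X : Type*} [Finite V] [ConditionallyCompleteLinearOrder X] [TopologicalSpace X]
  [OrderTopology X] {E : V → V → Prop} {T : (V → X) → V → X}

theorem IsAveraging.exists_mapClusterPt_iterate (h : IsAveraging E T) (x : V → X) :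
    ∃ y, MapClusterPt y atTop fun n => T^[n] x := by
  have hmem : ∀ n, T^[n] x ∈ Icc (fun _ => ⨅ v, x v) (fun _ => ⨆ v, x v) := fun n =>
    ⟨fun v => (h.iterate n).ge_of_forall_ge fun u _ => Finite.ciInf_le x u,
      fun v => (h.iterate n).le_of_forall_le fun u _ => Finite.le_ciSup x u⟩
  obtain ⟨y, -, hy⟩ := isCompact_Icc.exists_mapClusterPt (f := atTop)
    (tendsto_principal.mpr (Eventually.of_forall hmem))
  exact ⟨y, hy⟩

variable [Nonempty V]

theorem IsAveraging.tendsto_upperMean (h : IsAveraging E T) (x : V → X) :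
    Tendsto (fun n => ⨆ v, T^[n] x v) atTop (𝓝 (upperMean T x)) :=
  tendsto_atTop_ciInf (h.antitone_ciSup_iterate x) (h.bddBelow_range_ciSup_iterate x)

theorem IsAveraging.tendsto_lowerMean (h : IsAveraging E T) (x : V → X) :
    Tendsto (fun n => ⨅ v, T^[n] x v) atTop (𝓝 (lowerMean T x)) :=
  h.dual.tendsto_upperMean x

theorem IsStrictlyAveraging.lowerMean_eq_upperMean (h : IsStrictlyAveraging E T)
    (hT : Continuous T) {r : V} {N : ℕ} (hr : ∀ v, HasWalkOfLength E r v N) (x : V → X) :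
    lowerMean T x = upperMean T x := by
  obtain ⟨y, hy⟩ := h.exists_mapClusterPt_iterate x
  have hsup : ∀ n, ⨆ v, T^[n] y v = upperMean T x :=
    apply_iterate_eq_of_mapClusterPt hT continuous_ciSup_apply (h.tendsto_upperMean x) hy
  have hinf : ∀ n, ⨅ v, T^[n] y v = lowerMean T x :=
    apply_iterate_eq_of_mapClusterPt hT (continuous_ciSup_apply (X := Xᵒᵈ))
      (h.tendsto_lowerMean x) hy
  by_contra hne
  have hlt : ⨅ v, y v < ⨆ v, y v :=
    (ciInf_le_ciSup_of_finite y).lt_of_ne fun heq =>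
      hne ((hinf 0).symm.trans (heq.trans (hsup 0)))
  rcases (h.iterate N).ciSup_lt_or_lt_ciInf hr hlt with hdrop | hrise
  · exact hdrop.ne ((hsup N).trans (hsup 0).symm)
  · exact hrise.ne ((hinf 0).trans (hinf N).symm)

end Convergence

theorem stmt_15_general {V X : Type*} [Finite V] [Nonempty V]
    [ConditionallyCompleteLinearOrder X] [Nontrivial X] [TopologicalSpace X] [OrderTopology X]
    {E : V → V → Prop} {T : (V → X) → V → X} (h : IsStrictlyAveraging E T) (hT : Continuous T) :
    (∃! K : (V → X) → X, IsMean K ∧ ∀ x, K (T x) = K x) ↔ IsErgodic (RootE E) := by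
  rw [h.existsUnique_invariant_mean_iff]
  constructor
  · intro heq
    exact (h.hasCommonAncestors heq).isErgodic_rootE h.exists_pred
  · intro hE
    obtain ⟨r, hr⟩ := hE.exists_eventually_forall_hasWalkOfLength
    obtain ⟨N, hN⟩ := hr.exists
    exact h.lowerMean_eq_upperMean hT hN

section MeanType

variable {I : Set ℝ} {ι : Type*} [Fintype ι] {M : (ι → I) → I}

theorem isMeanOn_iff_isMean [Nonempty ι] : IsMeanOn I M ↔ IsMean M := by
  constructor
  · intro h
    constructor
    · intro x c hx
      exact (h x Finset.univ_nonempty).2.trans (Finset.sup'_le _ _ fun i _ => hx i)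
    · intro x c hx
      exact (h x Finset.univ_nonempty).1.trans' (Finset.le_inf' _ _ fun i _ => hx i)
  · intro h x _
    obtain ⟨i, hi⟩ := Finite.exists_min x
    obtain ⟨j, hj⟩ := Finite.exists_max x
    exact ⟨(Finset.inf'_le _ (Finset.mem_univ i)).trans (h.ge_of_forall_ge hi),
      le_trans (h.le_of_forall_le hj) (Finset.le_sup' (fun i => (x i : ℝ)) (Finset.mem_univ j))⟩

namespace IsStrictMeanOn

variable {x : ι → I} {c : I} {i : ι}

theorem lt_of_forall_le (hM : IsStrictMeanOn I M) (hx : ∀ j, x j ≤ c) (hi : x i < c) :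
    M x < c := by
  have : Nonempty ι := ⟨i⟩
  by_cases hconst : ∃ j k, x j ≠ x k
  · exact (hM.2 x Finset.univ_nonempty hconst).2.trans_le (Finset.sup'_le _ _ fun j _ => hx j)
  · push Not at hconst
    exact ((isMeanOn_iff_isMean.mp hM.1).le_of_forall_le fun j => (hconst j i).le).trans_lt hi

theorem gt_of_forall_ge (hM : IsStrictMeanOn I M) (hx : ∀ j, c ≤ x j) (hi : c < x i) :
    c < M x := by
  have : Nonempty ι := ⟨i⟩
  by_cases hconst : ∃ j k, x j ≠ x k
  · exact (hM.2 x Finset.univ_nonempty hconst).1.trans_le' (Finset.le_inf' _ _ fun j _ => hx j)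
  · push Not at hconst
    exact hi.trans_le ((isMeanOn_iff_isMean.mp hM.1).ge_of_forall_ge fun j => (hconst i j).le)

end IsStrictMeanOn

theorem isStrictlyAveraging_meanTypeMap {p : ℕ} {d : Fin p → ℕ} (hd : ∀ i, 0 < d i)
    {M : ∀ i, (Fin (d i) → I) → I} (hstrict : ∀ i, IsStrictMeanOn I (M i))
    (α : ∀ i, Fin (d i) → Fin p) :
    IsStrictlyAveraging (IncidenceE d α) (MeanTypeMap d M α) := by
  have hmean : ∀ i, IsMean (M i) := fun i =>
    have : Nonempty (Fin (d i)) := ⟨⟨0, hd i⟩⟩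
    isMeanOn_iff_isMean.mp (hstrict i).1
  constructor
  · exact ⟨fun hx => (hmean _).le_of_forall_le fun j => hx _ ⟨j, rfl⟩,
      fun hx => (hmean _).ge_of_forall_ge fun j => hx _ ⟨j, rfl⟩⟩
  · rintro x _ i c hx ⟨j, rfl⟩ hj
    exact (hstrict i).lt_of_forall_le (fun k => hx _ ⟨k, rfl⟩) hj
  · rintro x _ i c hx ⟨j, rfl⟩ hj
    exact (hstrict i).gt_of_forall_ge (fun k => hx _ ⟨k, rfl⟩) hj

theorem continuous_meanTypeMap {p : ℕ} {d : Fin p → ℕ} {M : ∀ i, (Fin (d i) → I) → I}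
    (hcont : ∀ i, Continuous (M i)) (α : ∀ i, Fin (d i) → Fin p) :
    Continuous (MeanTypeMap d M α) :=
  continuous_pi fun i => (hcont i).comp (continuous_pi fun j => continuous_apply (α i j))

end MeanType

/-- Let `I` be an interval with more than one point and `𝐌 = (M₁,…,M_p)` a `d`-averaging
mapping on `I` with all `Mᵢ` continuous and strict. Then there exists a unique
`𝐌_α`-invariant mean if and only if the root graph `𝓡(G_α)` is ergodic. -/
theorem stmt_15 {I : Set ℝ} (hI : I.OrdConnected)
    (hI2 : ∃ a b : ℝ, a ∈ I ∧ b ∈ I ∧ a ≠ b) {p : ℕ} (hp : 0 < p)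
    (d : Fin p → ℕ) (hd : ∀ i, 0 < d i)
    (M : ∀ i, (Fin (d i) → I) → I)
    (hstrict : ∀ i, IsStrictMeanOn I (M i)) (hcont : ∀ i, Continuous (M i))
    (α : ∀ i, Fin (d i) → Fin p) :
    (∃ K : (Fin p → I) → I, IsMeanOn I K ∧ (∀ x, K (MeanTypeMap d M α x) = K x) ∧
        ∀ L : (Fin p → I) → I, IsMeanOn I L → (∀ x, L (MeanTypeMap d M α x) = L x) → L = K) ↔
      IsErgodic (fun a b : (Root (IncidenceE d α) : Set (Fin p)) => IncidenceE d α a b) := by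
  obtain ⟨a, b, ha, hb, hab⟩ := hI2
  have : Nonempty (Fin p) := ⟨⟨0, hp⟩⟩
  have : Inhabited I := ⟨⟨a, ha⟩⟩
  have : Nontrivial I := ⟨⟨a, ha⟩, ⟨b, hb⟩, Subtype.coe_ne_coe.mp hab⟩
  simpa only [ExistsUnique, and_imp, and_assoc, isMeanOn_iff_isMean] using
    stmt_15_general (isStrictlyAveraging_meanTypeMap hd hstrict α) (continuous_meanTypeMap hcont α)
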